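/- arXiv:2301.05811 — 2 statements merged into one kernel-verified Lean document; each statement's English description precedes it below -/
import Mathlib

section
/- There is an absolute constant C > 0 such that the following holds. Let a, b ∈ ℝⁿ have nonempty supports A = supp(a) and B = supp(b) and entries bounded in absolute value by c > 0, let ε ∈ (0,1), and let m ≥ C/ε² be an integer. Let h¹,...,hᵐ be mutually independent uniform hash families on {1,...,n}, and for each i let j_A^i and j_B^i be the minimizers of hⁱ over A and over B, and Z_i = 1[hⁱ(j_A^i) = hⁱ(j_B^i)] · a[j_A^i] · b[j_B^i]. Define the idealized estimator F* = (|A∪B|/m) · ∑_{i=1}^{m} Z_i. Then with probability at least 5/6, |F* − ⟨a,b⟩| ≤ ε · c² · √(|A∩B| · |A∪B|). -/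
open MeasureTheory Finset
open scoped ENNReal


/-- The product measure on `J → ℝ` in which each coordinate is an independent
uniform random variable on `[0,1]`: a uniform hash family on `J`. -/
noncomputable def uniformHash (J : Type*) [Fintype J] : Measure (J → ℝ) :=
  Measure.pi fun _ : J => (volume : Measure ℝ).restrict (Set.Icc 0 1)

/-- The support `{i : x i ≠ 0}` of a vector, as a `Finset`. -/
noncomputable def supp {n : ℕ} (x : Fin n → ℝ) : Finset (Fin n) :=
  Finset.univ.filter fun i => x i ≠ 0

/-- A minimizer of `f` over the nonempty finite set `s` (the minimizer of a uniform
hash family over a nonempty set is almost surely unique). -/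
noncomputable def argminOn {α : Type*} (s : Finset α) (hs : s.Nonempty) (f : α → ℝ) : α :=
  (s.exists_min_image f hs).choose

/-- The MinHash random variable `Z = 1[h(j_A) = h(j_B)] ⬝ a[j_A] ⬝ b[j_B]`, where
`j_A` and `j_B` are the minimizers of the hash `h` over `A` and `B` respectively. -/
noncomputable def Zuw {n : ℕ} (a b : Fin n → ℝ) (A B : Finset (Fin n))
    (hA : A.Nonempty) (hB : B.Nonempty) (h : Fin n → ℝ) : ℝ :=
  (if h (argminOn A hA h) = h (argminOn B hB h) then (1 : ℝ) else 0) *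
    a (argminOn A hA h) * b (argminOn B hB h)

/-- `m` mutually independent uniform hash families on `J`. -/
noncomputable def hashFamilies (m : ℕ) (J : Type*) [Fintype J] :
    Measure (Fin m → J → ℝ) :=
  Measure.pi fun _ : Fin m => uniformHash J

instance uniformHash_prob (J : Type*) [Fintype J] : IsProbabilityMeasure (uniformHash J) := by
  have : IsProbabilityMeasure ((volume : Measure ℝ).restrict (Set.Icc 0 1)) :=
    ⟨by simp⟩
  unfold uniformHash
  infer_instance

instance hashFamilies_prob (m : ℕ) (J : Type*) [Fintype J] :
    IsProbabilityMeasure (hashFamilies m J) := by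
  unfold hashFamilies
  infer_instance

/-- almost sure injectivity -/
lemma ae_inj (n : ℕ) : ∀ᵐ h ∂(uniformHash (Fin n)), Function.Injective h := by
  have key : ∀ i j : Fin n, i ≠ j → ∀ᵐ h ∂(uniformHash (Fin n)), h i ≠ h j := by
    intro i j hij
    have h1 : uniformHash (Fin n) ≪ (volume : Measure (Fin n → ℝ)) := by
      unfold uniformHash
      rw [← Measure.restrict_pi_pi, ← volume_pi]
      exact Measure.absolutelyContinuous_of_le Measure.restrict_le_self
    apply h1.ae_le
    let S : Submodule ℝ (Fin n → ℝ) :=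
      LinearMap.ker ((LinearMap.proj i : (Fin n → ℝ) →ₗ[ℝ] ℝ) - LinearMap.proj j)
    have hS : S ≠ ⊤ := by
      intro h
      have : (Pi.single i 1 : Fin n → ℝ) ∈ S := by rw [h]; trivial
      simp [S, hij.symm] at this
    have h0 := Measure.addHaar_submodule (volume : Measure (Fin n → ℝ)) S hS
    rw [mem_ae_iff]
    convert h0 using 2
    ext h
    simp [S, sub_eq_zero]
  have : ∀ᵐ h ∂(uniformHash (Fin n)), ∀ i j : Fin n, i ≠ j → h i ≠ h j := by
    rw [ae_all_iff]; intro i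
    rw [ae_all_iff]; intro j
    by_cases hij : i = j
    · simp [hij]
    · filter_upwards [key i j hij] with h hh _ using hh
  filter_upwards [this] with h hh i j hij
  by_contra hne
  exact hh i j hne hij

/-- the event that j minimizes over U -/
def minEv {n : ℕ} (U : Finset (Fin n)) (j : Fin n) : Set (Fin n → ℝ) :=
  {h | ∀ k ∈ U, h j ≤ h k}

lemma minEv_meas {n : ℕ} (U : Finset (Fin n)) (j : Fin n) : MeasurableSet (minEv U j) := by
  have : minEv U j = ⋂ k ∈ U, {h : Fin n → ℝ | h j ≤ h k} := by
    ext h; simp [minEv]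
  rw [this]
  exact Finset.measurableSet_biInter _ fun k _ =>
    measurableSet_le (measurable_pi_apply j) (measurable_pi_apply k)

lemma minEv_symm {n : ℕ} (U : Finset (Fin n)) (i j : Fin n) (hi : i ∈ U) (hj : j ∈ U) :
    (uniformHash (Fin n)).real (minEv U i) = (uniformHash (Fin n)).real (minEv U j) := by
  have : IsProbabilityMeasure ((volume : Measure ℝ).restrict (Set.Icc 0 1)) :=
    ⟨by simp⟩
  have mp := measurePreserving_piCongrLeft
    (fun _ : Fin n => (volume : Measure ℝ).restrict (Set.Icc 0 1)) (Equiv.swap i j)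
  have h2 := mp.measure_preimage (minEv_meas U j).nullMeasurableSet
  unfold Measure.real
  congr 1
  unfold uniformHash
  rw [← h2]
  congr 1
  have happ : ∀ (h : Fin n → ℝ) k,
      (MeasurableEquiv.piCongrLeft (fun _ : Fin n => ℝ) (Equiv.swap i j)) h k
        = h (Equiv.swap i j k) := by
    intro h k
    have := Equiv.piCongrLeft_apply_apply (fun _ : Fin n => ℝ) (Equiv.swap i j) h
      (Equiv.swap i j k)
    rw [Equiv.swap_apply_self] at this
    exact this
  have hU : ∀ k ∈ U, Equiv.swap i j k ∈ U := by
    intro k hk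
    rw [Equiv.swap_apply_def]
    split_ifs <;> assumption
  ext h
  simp only [minEv, Set.mem_ofPred_eq, Set.mem_preimage, happ, Equiv.swap_apply_right]
  constructor
  · intro H k hk
    exact H _ (hU k hk)
  · intro H k hk
    have := H _ (hU k hk)
    simpa using this

lemma minEv_prob {n : ℕ} (U : Finset (Fin n)) (j : Fin n) (hj : j ∈ U) :
    (uniformHash (Fin n)).real (minEv U j) = 1 / (U.card : ℝ) := by
  have h1 : (uniformHash (Fin n)).real (⋃ i ∈ U, minEv U i)
      = ∑ i ∈ U, (uniformHash (Fin n)).real (minEv U i) := by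
    unfold Measure.real
    rw [measure_biUnion_finset₀, ENNReal.toReal_sum]
    · intros; exact measure_ne_top _ _
    · intro i hi k hk hik
      show (uniformHash (Fin n)) _ = 0
      refine measure_mono_null ?_ (ae_inj n)
      intro h hh hinj
      exact hik (hinj (le_antisymm (hh.1 k hk) (hh.2 i hi)))
    · intro i _
      exact (minEv_meas U i).nullMeasurableSet
  have h2 : (⋃ i ∈ U, minEv U i) = Set.univ := by
    rw [Set.eq_univ_iff_forall]
    intro h
    obtain ⟨i, hi, hh⟩ := U.exists_min_image h ⟨j, hj⟩
    simp only [Set.mem_iUnion]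
    exact ⟨i, hi, hh⟩
  rw [h2, probReal_univ, Finset.sum_congr rfl (fun i hi => minEv_symm U i j hi hj)] at h1
  have : (U.card : ℝ) ≠ 0 := by
    exact_mod_cast (Finset.card_pos.2 ⟨j, hj⟩).ne'
  simp only [Finset.sum_const, nsmul_eq_mul] at h1
  field_simp
  linarith

/-- measurable version of Z -/
noncomputable def Wv {n : ℕ} (d : Fin n → ℝ) (U I : Finset (Fin n)) (h : Fin n → ℝ) : ℝ :=
  ∑ j ∈ I, (minEv U j).indicator (fun _ => d j) h

lemma Wv_meas {n : ℕ} (d : Fin n → ℝ) (U I : Finset (Fin n)) : Measurable (Wv d U I) := by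
  unfold Wv
  exact Finset.measurable_sum _ fun j _ => measurable_const.indicator (minEv_meas U j)

lemma Wv_bdd {n : ℕ} (d : Fin n → ℝ) (U I : Finset (Fin n)) (h : Fin n → ℝ) :
    ‖Wv d U I h‖ ≤ ∑ j ∈ I, ‖d j‖ := by
  unfold Wv
  exact (norm_sum_le _ _).trans (Finset.sum_le_sum fun j _ => norm_indicator_le_norm_self _ _)

lemma Wv_int {n : ℕ} (d : Fin n → ℝ) (U I : Finset (Fin n)) (hI : I ⊆ U) :
    ∫ h, Wv d U I h ∂(uniformHash (Fin n)) = (∑ j ∈ I, d j) / U.card := by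
  unfold Wv
  rw [integral_finsetSum]
  · rw [Finset.sum_div]
    refine Finset.sum_congr rfl fun j hj => ?_
    rw [integral_indicator_const _ (minEv_meas U j), minEv_prob U j (hI hj)]
    simp [div_eq_inv_mul]
  · intro j _
    exact (integrable_const _).indicator (minEv_meas U j)

lemma Wv_single {n : ℕ} (d : Fin n → ℝ) (U I : Finset (Fin n)) (hI : I ⊆ U) (h : Fin n → ℝ)
    (hinj : Function.Injective h) (j : Fin n) (hj : j ∈ I) (hm : h ∈ minEv U j) :
    Wv d U I h = d j := by
  unfold Wv
  rw [Finset.sum_eq_single_of_mem j hj]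
  · simp [hm]
  · intro k hk hkj
    rw [Set.indicator_of_notMem]
    intro hk2
    exact hkj (hinj (le_antisymm (hk2 j (hI hj)) (hm k (hI hk))))

lemma Wv_zero {n : ℕ} (d : Fin n → ℝ) (U I : Finset (Fin n)) (h : Fin n → ℝ)
    (hm : ∀ j ∈ I, h ∉ minEv U j) : Wv d U I h = 0 := by
  unfold Wv
  exact Finset.sum_eq_zero fun j hj => Set.indicator_of_notMem (hm j hj) _

lemma Wv_sq {n : ℕ} (d : Fin n → ℝ) (U I : Finset (Fin n)) (hI : I ⊆ U) (h : Fin n → ℝ)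
    (hinj : Function.Injective h) : Wv d U I h ^ 2 = Wv (fun j => d j ^ 2) U I h := by
  by_cases H : ∃ j ∈ I, h ∈ minEv U j
  · obtain ⟨j, hj, hm⟩ := H
    rw [Wv_single d U I hI h hinj j hj hm, Wv_single _ U I hI h hinj j hj hm]
  · push Not at H
    rw [Wv_zero d U I h H, Wv_zero _ U I h H]; simp

lemma Wv_memLp {n : ℕ} (d : Fin n → ℝ) (U I : Finset (Fin n)) :
    MemLp (Wv d U I) 2 (uniformHash (Fin n)) :=
  MemLp.of_bound (Wv_meas d U I).aestronglyMeasurable _ (Filter.Eventually.of_forall (Wv_bdd d U I))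

lemma Wv_var {n : ℕ} (d : Fin n → ℝ) (U I : Finset (Fin n)) (hI : I ⊆ U) (K : ℝ)
    (hK : ∀ j, d j ^ 2 ≤ K) :
    ProbabilityTheory.variance (Wv d U I) (uniformHash (Fin n)) ≤ I.card * K / U.card := by
  refine (ProbabilityTheory.variance_le_expectation_sq
    (Wv_meas d U I).aestronglyMeasurable).trans ?_
  have : ∫ h, (Wv d U I ^ 2) h ∂(uniformHash (Fin n))
      = ∫ h, Wv (fun j => d j ^ 2) U I h ∂(uniformHash (Fin n)) := by
    apply integral_congr_ae
    filter_upwards [ae_inj n] with h hh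
    exact Wv_sq d U I hI h hh
  rw [this, Wv_int _ U I hI]
  gcongr
  calc ∑ j ∈ I, d j ^ 2 ≤ ∑ j ∈ I, K := Finset.sum_le_sum fun j _ => hK j
    _ = _ := by simp

lemma Zuw_eq {n : ℕ} (a b : Fin n → ℝ) (A B : Finset (Fin n))
    (hA : A.Nonempty) (hB : B.Nonempty) (h : Fin n → ℝ) (hinj : Function.Injective h) :
    Zuw a b A B hA hB h = Wv (fun j => a j * b j) (A ∪ B) (A ∩ B) h := by
  have hsub : A ∩ B ⊆ A ∪ B := fun x hx => by simp at hx ⊢; exact Or.inl hx.1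
  obtain ⟨hA1, hA2⟩ : argminOn A hA h ∈ A ∧ ∀ x ∈ A, h (argminOn A hA h) ≤ h x :=
    (A.exists_min_image h hA).choose_spec
  obtain ⟨hB1, hB2⟩ : argminOn B hB h ∈ B ∧ ∀ x ∈ B, h (argminOn B hB h) ≤ h x :=
    (B.exists_min_image h hB).choose_spec
  unfold Zuw
  generalize argminOn A hA h = p at *
  generalize argminOn B hB h = q at *
  split_ifs with hpq
  · obtain rfl := hinj hpq
    rw [Wv_single _ _ _ hsub h hinj p (by simp [hA1, hB1])]
    · simp
    · intro k hk
      rcases Finset.mem_union.1 hk with hk | hk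
      · exact hA2 k hk
      · exact hB2 k hk
  · rw [Wv_zero]
    · simp
    · intro j hj hm
      rw [Finset.mem_inter] at hj
      apply hpq
      have e1 := le_antisymm (hA2 j hj.1) (hm p (by simp [hA1]))
      have e2 := le_antisymm (hB2 j hj.2) (hm q (by simp [hB1]))
      rw [e1, e2]

lemma ae_Z {n m : ℕ} (a b : Fin n → ℝ) (A B : Finset (Fin n))
    (hA : A.Nonempty) (hB : B.Nonempty) :
    ∀ᵐ H ∂(hashFamilies m (Fin n)), ∀ i,
      Zuw a b A B hA hB (H i) = Wv (fun j => a j * b j) (A ∪ B) (A ∩ B) (H i) := by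
  rw [ae_all_iff]
  intro i
  have mp := measurePreserving_eval (fun _ : Fin m => uniformHash (Fin n)) i
  have := mp.quasiMeasurePreserving.ae (ae_inj n)
  unfold hashFamilies
  filter_upwards [this] with H hH
  exact Zuw_eq a b A B hA hB (H i) hH

lemma chebW {n m : ℕ} (hm : 0 < m) (d : Fin n → ℝ) (U I : Finset (Fin n)) (hI : I ⊆ U)
    (hne : U.Nonempty) (K : ℝ) (hK : ∀ j, d j ^ 2 ≤ K) (t : ℝ) (ht : 0 < t) :
    hashFamilies m (Fin n) {H | t ≤ |((U.card : ℝ) / m) * (∑ i, Wv d U I (H i)) - ∑ j ∈ I, d j|}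
      ≤ ENNReal.ofReal ((U.card * (I.card * K) / m) / t ^ 2) := by
  have hmp : ∀ i : Fin m, MeasurePreserving (fun H : Fin m → Fin n → ℝ => H i)
      (hashFamilies m (Fin n)) (uniformHash (Fin n)) := fun i =>
    measurePreserving_eval (fun _ : Fin m => uniformHash (Fin n)) i
  have hLp : ∀ i : Fin m, MemLp (fun H : Fin m → Fin n → ℝ => Wv d U I (H i)) 2
      (hashFamilies m (Fin n)) := fun i => (Wv_memLp d U I).comp_measurePreserving (hmp i)
  have hind : ProbabilityTheory.iIndepFun
      (fun (i : Fin m) (H : Fin m → Fin n → ℝ) => Wv d U I (H i)) (hashFamilies m (Fin n)) :=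
    ProbabilityTheory.iIndepFun_pi (μ := fun _ : Fin m => uniformHash (Fin n))
      (X := fun _ => Wv d U I) (fun _ => (Wv_meas d U I).aemeasurable)
  have hvar1 : ∀ i : Fin m, ProbabilityTheory.variance
      (fun H : Fin m → Fin n → ℝ => Wv d U I (H i)) (hashFamilies m (Fin n))
      = ProbabilityTheory.variance (Wv d U I) (uniformHash (Fin n)) := by
    intro i
    rw [← (hmp i).map_eq, ProbabilityTheory.variance_map]
    · rfl
    · exact (Wv_meas d U I).aemeasurable
    · exact (hmp i).measurable.aemeasurable
  have hint1 : ∀ i : Fin m, ∫ H, Wv d U I (H i) ∂(hashFamilies m (Fin n))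
      = (∑ j ∈ I, d j) / U.card := by
    intro i
    rw [← Wv_int d U I hI, ← (hmp i).map_eq, integral_map (hmp i).measurable.aemeasurable
      (Wv_meas d U I).aestronglyMeasurable]
  have hU : (0 : ℝ) < U.card := by exact_mod_cast Finset.card_pos.2 hne
  have hm' : (0 : ℝ) < m := by exact_mod_cast hm
  set F : (Fin m → Fin n → ℝ) → ℝ := fun H => ((U.card : ℝ) / m) * (∑ i, Wv d U I (H i)) with hF
  have hsumLp : MemLp (fun H : Fin m → Fin n → ℝ => ∑ i, Wv d U I (H i)) 2
      (hashFamilies m (Fin n)) := memLp_finsetSum _ fun i _ => hLp i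
  have hFLp : MemLp F 2 (hashFamilies m (Fin n)) := hsumLp.const_mul _
  have hFint : ∫ H, F H ∂(hashFamilies m (Fin n)) = ∑ j ∈ I, d j := by
    simp only [hF]
    rw [integral_const_mul, integral_finsetSum]
    · simp only [hint1]
      simp
      field_simp
    · intro i _
      exact (hLp i).integrable (by norm_num)
  have hFvar : ProbabilityTheory.variance F (hashFamilies m (Fin n))
      ≤ U.card * (I.card * K) / m := by
    simp only [hF]
    rw [ProbabilityTheory.variance_const_mul]
    have : ProbabilityTheory.variance (fun H : Fin m → Fin n → ℝ => ∑ i, Wv d U I (H i))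
        (hashFamilies m (Fin n)) = m * ProbabilityTheory.variance (Wv d U I) (uniformHash (Fin n)) := by
      have := ProbabilityTheory.IndepFun.variance_sum (μ := hashFamilies m (Fin n))
        (X := fun (i : Fin m) (H : Fin m → Fin n → ℝ) => Wv d U I (H i)) (s := Finset.univ)
        (fun i _ => hLp i) (fun i _ j _ hij => hind.indepFun hij)
      simp only [hvar1] at this
      simp only [Finset.sum_const, Finset.card_univ, Fintype.card_fin, nsmul_eq_mul] at this
      rw [← this]
      congr 1
      ext H
      simp
    rw [this]
    calc _ ≤ ((U.card : ℝ) / m) ^ 2 * (m * (I.card * K / U.card)) := by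
          gcongr
          exact Wv_var d U I hI K hK
      _ = _ := by field_simp
  have := ProbabilityTheory.meas_ge_le_variance_div_sq hFLp ht
  rw [hFint] at this
  refine this.trans (ENNReal.ofReal_le_ofReal ?_)
  gcongr

/-- There is an absolute constant `C > 0` such that for vectors `a, b ∈ ℝⁿ` with nonempty
supports `A`, `B` and entries bounded by `c > 0`, `ε ∈ (0,1)`, an integer `m ≥ C/ε²`, and
mutually independent uniform hash families `h¹,...,hᵐ`, the idealized estimator
`F* = (|A ∪ B| / m) ∑ᵢ Zᵢ` satisfies `|F* - ⟨a,b⟩| ≤ ε c² √(|A ∩ B| |A ∪ B|)`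
with probability at least `5/6`. -/
theorem minhash_idealized_estimator :
    ∃ C : ℝ, 0 < C ∧
      ∀ (n : ℕ) (a b : Fin n → ℝ) (c : ℝ), 0 < c →
      (∀ i, |a i| ≤ c) → (∀ i, |b i| ≤ c) →
      ∀ (hA : (supp a).Nonempty) (hB : (supp b).Nonempty),
      ∀ ε : ℝ, ε ∈ Set.Ioo (0 : ℝ) 1 →
      ∀ m : ℕ, C / ε ^ 2 ≤ (m : ℝ) →
        (5 : ℝ≥0∞) / 6 ≤
          hashFamilies m (Fin n)
            {H : Fin m → Fin n → ℝ |
              |(((supp a ∪ supp b).card : ℝ) / m) *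
                  (∑ i, Zuw a b (supp a) (supp b) hA hB (H i)) - ∑ k, a k * b k|
                ≤ ε * c ^ 2 *
                    Real.sqrt (((supp a ∩ supp b).card : ℝ) * ((supp a ∪ supp b).card : ℝ))} := by
  refine ⟨6, by norm_num, ?_⟩
  intro n a b c hc ha hb hA hB ε hε m hm
  obtain ⟨hε0, hε1⟩ := hε
  have hm0 : (0 : ℝ) < m := lt_of_lt_of_le (by positivity) hm
  have hmN : 0 < m := by exact_mod_cast hm0
  have hsum : ∑ k, a k * b k = ∑ k ∈ supp a ∩ supp b, a k * b k := by
    symm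
    apply Finset.sum_subset (Finset.subset_univ _)
    intro k _ hk
    simp only [supp, Finset.mem_inter, Finset.mem_filter, Finset.mem_univ, true_and] at hk
    by_contra hne
    exact hk ⟨left_ne_zero_of_mul hne, right_ne_zero_of_mul hne⟩
  have hsub : supp a ∩ supp b ⊆ supp a ∪ supp b := fun x hx => by
    rw [Finset.mem_inter] at hx
    exact Finset.mem_union_left _ hx.1
  have hne : (supp a ∪ supp b).Nonempty := hA.mono Finset.subset_union_left
  have hZ := ae_Z (m := m) a b (supp a) (supp b) hA hB
  rw [hsum]
  set U := supp a ∪ supp b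
  set I := supp a ∩ supp b
  set S : Set (Fin m → Fin n → ℝ) := {H : Fin m → Fin n → ℝ |
        |((U.card : ℝ) / m) * (∑ i, Zuw a b (supp a) (supp b) hA hB (H i)) - ∑ k ∈ I, a k * b k|
          ≤ ε * c ^ 2 * Real.sqrt ((I.card : ℝ) * (U.card : ℝ))} with hS
  suffices hbad : hashFamilies m (Fin n) Sᶜ ≤ 1 / 6 by
    have h1 : (1 : ℝ≥0∞) ≤ hashFamilies m (Fin n) S + 1 / 6 := by
      calc (1 : ℝ≥0∞) = hashFamilies m (Fin n) (S ∪ Sᶜ) := by simp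
        _ ≤ _ := measure_union_le _ _
        _ ≤ _ := by gcongr
    have h2 : (5 : ℝ≥0∞) / 6 + 1 / 6 = 1 := by
      rw [← ENNReal.add_div]
      norm_num
      exact ENNReal.div_self (by norm_num) (by norm_num)
    have h3 : (1 : ℝ≥0∞) / 6 ≠ ∞ := by simp
    exact (ENNReal.add_le_add_iff_right h3).1 (h2.le.trans h1)
  rcases Finset.eq_empty_or_nonempty I with hI | hI
  · have : hashFamilies m (Fin n) Sᶜ = 0 := by
      change ∀ᵐ H ∂(hashFamilies m (Fin n)), H ∈ S
      filter_upwards [hZ] with H hH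
      rw [hS]
      simp only [Set.mem_ofPred_eq, hH, hI]
      simp [Wv]
    rw [this]
    exact zero_le
  · have hIc : (0 : ℝ) < I.card := by exact_mod_cast Finset.card_pos.2 hI
    have hUc : (0 : ℝ) < U.card := by exact_mod_cast Finset.card_pos.2 hne
    have ht : 0 < ε * c ^ 2 * Real.sqrt ((I.card : ℝ) * (U.card : ℝ)) := by positivity
    have hK : ∀ j, (a j * b j) ^ 2 ≤ c ^ 4 := by
      intro j
      have h1 : |a j * b j| ≤ c * c := by
        rw [abs_mul]
        exact mul_le_mul (ha j) (hb j) (abs_nonneg _) hc.le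
      calc (a j * b j) ^ 2 = |a j * b j| ^ 2 := (sq_abs _).symm
        _ ≤ (c * c) ^ 2 := by gcongr
        _ = c ^ 4 := by ring
    have hch := chebW hmN (fun j => a j * b j) U I hsub hne (c ^ 4) hK _ ht
    have hle : hashFamilies m (Fin n) Sᶜ ≤ hashFamilies m (Fin n)
        {H | ε * c ^ 2 * Real.sqrt ((I.card : ℝ) * (U.card : ℝ)) ≤
        |((U.card : ℝ) / m) * (∑ i, Wv (fun j => a j * b j) U I (H i)) - ∑ j ∈ I, a j * b j|} := by
      refine measure_mono_ae ?_
      filter_upwards [hZ] with H hH hHS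
      by_contra hcon
      apply hHS
      rw [hS]
      simp only [Set.mem_ofPred_eq, hH]
      exact (not_le.1 hcon).le
    refine (hle.trans hch).trans ?_
    have h16 : (1 : ℝ≥0∞) / 6 = ENNReal.ofReal (1 / 6) := by
      rw [ENNReal.ofReal_div_of_pos (by norm_num)]
      simp
    rw [h16]
    apply ENNReal.ofReal_le_ofReal
    rw [mul_pow, Real.sq_sqrt (by positivity)]
    have h6 : 6 ≤ m * ε ^ 2 := by
      rwa [div_le_iff₀ (by positivity)] at hm
    have : (U.card : ℝ) * (I.card * c ^ 4) / m / ((ε * c ^ 2) ^ 2 * (I.card * U.card))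
        = 1 / (m * ε ^ 2) := by
      field_simp
    rw [this]
    exact one_div_le_one_div_of_le (by norm_num) h6
end

section
/- Let L be a positive integer and let u, v ∈ ℝⁿ be nonzero unit vectors all of whose squared entries are integer multiples of 1/L, with expanded supports Ū and V̄ in {1,...,n}×{1,...,L}. Let (h(ℓ))_{ℓ∈{1,...,n}×{1,...,L}} be independent random variables, each uniformly distributed on [0,1]. Then for every index j with u[j] ≠ 0 and v[j] ≠ 0, the probability that min_{ℓ∈Ū} h(ℓ) = min_{ℓ∈V̄} h(ℓ) and that the common minimizer of h over Ū∪V̄ lies in the block {j}×{1,...,L} is exactly min(u[j]², v[j]²) / (∑_{k=1}^{n} max(u[k]², v[k]²)). In particular, conditioned on the two minima coinciding, the block index of the common minimizer equals j with probability min(u[j]², v[j]²) / ∑_{k : u[k]≠0, v[k]≠0} min(u[k]², v[k]²). -/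
open MeasureTheory Finset
open scoped ENNReal

/-- The expanded support of a vector `u` with discretization parameter `L`:
`Ū = {(i,k) ∈ {1,...,n} × {1,...,L} : k ≤ u[i]² ⬝ L}`, so that the block
`{i} × {1,...,L}` contributes exactly `u[i]² ⬝ L` elements when `u[i]²` is an
integer multiple of `1/L`.  (Here `Fin L` represents `{1,...,L}` via `k ↦ k+1`.) -/
noncomputable def expandedSupport {n : ℕ} (L : ℕ) (u : Fin n → ℝ) :
    Finset (Fin n × Fin L) :=
  Finset.univ.filter fun p => ((p.2 : ℕ) + 1 : ℝ) ≤ (u p.1) ^ 2 * L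

lemma card_aux {n : ℕ} (L : ℕ) (m : Fin n → ℕ) (hm : ∀ i, m i ≤ L) (K : Finset (Fin n)) :
    (Finset.univ.filter fun p : Fin n × Fin L => p.1 ∈ K ∧ (p.2 : ℕ) < m p.1).card
      = ∑ k ∈ K, m k := by
  have : (Finset.univ.filter fun p : Fin n × Fin L => p.1 ∈ K ∧ (p.2 : ℕ) < m p.1)
     = K.biUnion fun k => (Finset.univ.filter fun y : Fin L => (y : ℕ) < m k).map
        (Function.Embedding.sectR k (Fin L)) := by
    ext ⟨a, b⟩
    simp only [Finset.mem_filter, Finset.mem_univ, true_and, Finset.mem_biUnion, Finset.mem_map,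
      Function.Embedding.sectR_apply, Prod.mk.injEq]
    constructor
    · rintro ⟨h1, h2⟩
      exact ⟨a, h1, b, h2, rfl, rfl⟩
    · rintro ⟨a', h1, b', h2, rfl, rfl⟩
      exact ⟨h1, h2⟩
  rw [this, Finset.card_biUnion]
  · refine Finset.sum_congr rfl fun k _ => ?_
    rw [Finset.card_map, Fin.card_filter_val_lt]
    simp [hm k]
  · intro x _ y _ hxy
    rw [Function.onFun, Finset.disjoint_left]
    rintro ⟨a, b⟩ h1 h2
    simp only [Finset.mem_filter, Finset.mem_univ, true_and, Finset.mem_map,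
      Function.Embedding.sectR_apply, Prod.mk.injEq] at h1 h2
    obtain ⟨_, _, h1, _⟩ := h1
    obtain ⟨_, _, h2, _⟩ := h2
    exact hxy (h1.trans h2.symm)

lemma uniformHash_eq (J : Type*) [Fintype J] : uniformHash J =
    (volume : Measure (J → ℝ)).restrict (Set.pi Set.univ fun _ => Set.Icc 0 1) := by
  rw [uniformHash, volume_pi, Measure.restrict_pi_pi]

instance (J : Type*) [Fintype J] : IsProbabilityMeasure (uniformHash J) := by
  constructor
  rw [uniformHash, Measure.pi_univ]
  simp

lemma no_tie {J : Type*} [Fintype J] {a b : J} (hab : a ≠ b) :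
    ∀ᵐ h ∂(uniformHash J), h a ≠ h b := by
  classical
  rw [uniformHash_eq]
  apply ae_restrict_of_ae
  let S : Submodule ℝ (J → ℝ) :=
    LinearMap.ker ((LinearMap.proj a : (J → ℝ) →ₗ[ℝ] ℝ) - (LinearMap.proj b : (J → ℝ) →ₗ[ℝ] ℝ))
  have hS : S ≠ ⊤ := by
    intro h
    have : Pi.single a 1 ∈ S := h ▸ Submodule.mem_top
    simp [S, hab] at this
  have := Measure.addHaar_submodule (volume : Measure (J → ℝ)) S hS
  rw [ae_iff]
  convert this using 2
  ext h
  simp [S, sub_eq_zero]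

lemma no_ties (J : Type*) [Fintype J] :
    ∀ᵐ h ∂(uniformHash J), Function.Injective h := by
  have : ∀ᵐ h ∂(uniformHash J), ∀ a b : J, a ≠ b → h a ≠ h b := by
    rw [ae_all_iff]; intro a
    rw [ae_all_iff]; intro b
    by_cases hab : a = b
    · simp [hab]
    · filter_upwards [no_tie hab] with h hh _ using hh
  filter_upwards [this] with h hh a b hab
  by_contra hne
  exact hh a b hne hab

lemma meas_M {J : Type*} [Fintype J] (W : Finset J) (a : J) :
    MeasurableSet {h : J → ℝ | ∀ b ∈ W, h a ≤ h b} := by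
  have : {h : J → ℝ | ∀ b ∈ W, h a ≤ h b} = ⋂ b ∈ W, {h : J → ℝ | h a ≤ h b} := by
    ext; simp
  rw [this]
  exact Finset.measurableSet_biInter _ fun b _ =>
    measurableSet_le (measurable_pi_apply a) (measurable_pi_apply b)

lemma symm_M {J : Type*} [Fintype J] [DecidableEq J] (W : Finset J) {a c : J} (ha : a ∈ W)
    (hc : c ∈ W) :
    uniformHash J {h : J → ℝ | ∀ b ∈ W, h a ≤ h b} =
      uniformHash J {h : J → ℝ | ∀ b ∈ W, h c ≤ h b} := by
  have mp := measurePreserving_piCongrLeft (α := fun _ : J => ℝ)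
    (fun _ : J => (volume : Measure ℝ).restrict (Set.Icc 0 1)) (Equiv.swap a c)
  have := mp.measure_preimage (meas_M W a).nullMeasurableSet
  change _ = uniformHash J _ at this
  rw [← this]
  change uniformHash J _ = _
  congr 1
  ext h
  have key : ∀ x, MeasurableEquiv.piCongrLeft (fun _ : J => ℝ) (Equiv.swap a c) h x
      = h (Equiv.swap a c x) := by
    intro x
    have := Equiv.piCongrLeft_apply_apply (fun _ : J => ℝ) (Equiv.swap a c) h (Equiv.swap a c x)
    simp only [Equiv.swap_apply_self] at this
    exact this
  have hmem : ∀ b ∈ W, Equiv.swap a c b ∈ W := by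
    intro b hb
    rw [Equiv.swap_apply_def]
    split_ifs <;> assumption
  simp only [Set.mem_preimage, Set.mem_ofPred_eq, key, Equiv.swap_apply_left]
  constructor
  · intro H b hb
    simpa using H _ (hmem b hb)
  · intro H b hb
    exact H _ (hmem b hb)

lemma argminOn_mem {α : Type*} (s : Finset α) (hs : s.Nonempty) (f : α → ℝ) :
    argminOn s hs f ∈ s := (s.exists_min_image f hs).choose_spec.1

lemma argminOn_le {α : Type*} (s : Finset α) (hs : s.Nonempty) (f : α → ℝ) :
    ∀ b ∈ s, f (argminOn s hs f) ≤ f b := (s.exists_min_image f hs).choose_spec.2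

lemma argmin_iff {α : Type*} (s : Finset α) (hs : s.Nonempty) (f : α → ℝ)
    (hf : Function.Injective f) (a : α) (ha : a ∈ s) :
    argminOn s hs f = a ↔ ∀ b ∈ s, f a ≤ f b := by
  constructor
  · rintro rfl
    exact argminOn_le s hs f
  · intro h
    exact hf (le_antisymm (argminOn_le s hs f a ha) (h _ (argminOn_mem s hs f)))

lemma union_M {J : Type*} [Fintype J] [DecidableEq J] (W T : Finset J) (hT : T ⊆ W)
    (p : J) (hp : p ∈ W) :
    uniformHash J {h : J → ℝ | ∃ a ∈ T, ∀ b ∈ W, h a ≤ h b} =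
      T.card * uniformHash J {h : J → ℝ | ∀ b ∈ W, h p ≤ h b} := by
  have : {h : J → ℝ | ∃ a ∈ T, ∀ b ∈ W, h a ≤ h b} =
      ⋃ a ∈ T, {h : J → ℝ | ∀ b ∈ W, h a ≤ h b} := by ext; simp
  rw [this, measure_biUnion_finset₀]
  · rw [Finset.sum_congr rfl fun a ha => symm_M W (hT ha) hp]
    simp
  · intro a ha b hb hab
    refine measure_mono_null ?_ (ae_iff.1 (no_tie hab))
    rintro h ⟨h1, h2⟩
    simpa using le_antisymm (h1 b (hT hb)) (h2 a (hT ha))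
  · exact fun a _ => (meas_M W a).nullMeasurableSet

lemma prob_T {J : Type*} [Fintype J] [DecidableEq J] (W T : Finset J) (hT : T ⊆ W)
    (hW : W.Nonempty) :
    uniformHash J {h : J → ℝ | ∃ a ∈ T, ∀ b ∈ W, h a ≤ h b} = T.card / W.card := by
  obtain ⟨p, hp⟩ := hW
  have h1 := union_M W W subset_rfl p hp
  have h2 : {h : J → ℝ | ∃ a ∈ W, ∀ b ∈ W, h a ≤ h b} = Set.univ := by
    ext h
    simpa using W.exists_min_image h ⟨p, hp⟩
  rw [h2, measure_univ] at h1
  rw [union_M W T hT p hp, div_eq_mul_inv]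
  congr 1
  exact ENNReal.eq_inv_of_mul_eq_one_left (by rw [mul_comm]; exact h1.symm)

lemma prob_argmin {J : Type*} [Fintype J] [DecidableEq J] (W T : Finset J) (hT : T ⊆ W)
    (hW : W.Nonempty) (E : Set (J → ℝ))
    (hE : ∀ h : J → ℝ, Function.Injective h → (h ∈ E ↔ argminOn W hW h ∈ T)) :
    uniformHash J E = T.card / W.card := by
  rw [← prob_T W T hT hW]
  apply measure_congr
  filter_upwards [no_ties J] with h hh
  apply propext
  change h ∈ E ↔ ∃ a ∈ T, ∀ b ∈ W, h a ≤ h b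
  rw [hE h hh]
  constructor
  · intro H
    exact ⟨_, H, argminOn_le W hW h⟩
  · rintro ⟨a, ha, H⟩
    rwa [(argmin_iff W hW h hh a (hT ha)).2 H]

lemma inf_eq_iff {J : Type*} [DecidableEq J] (U V : Finset J) (hU : U.Nonempty)
    (hV : V.Nonempty) (hW : (U ∪ V).Nonempty) (h : J → ℝ) (hh : Function.Injective h) :
    U.inf' hU h = V.inf' hV h ↔ argminOn (U ∪ V) hW h ∈ U ∩ V := by
  have hle := argminOn_le (U ∪ V) hW h
  have hmem := argminOn_mem (U ∪ V) hW h
  set a := argminOn (U ∪ V) hW h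
  obtain ⟨x, hx, hx'⟩ := U.exists_mem_eq_inf' hU h
  obtain ⟨y, hy, hy'⟩ := V.exists_mem_eq_inf' hV h
  constructor
  · intro H
    have hxy : x = y := hh (by rw [← hx', ← hy', H])
    subst hxy
    have : a = x := by
      apply hh
      apply le_antisymm (hle x (Finset.mem_union_left _ hx))
      rcases Finset.mem_union.1 hmem with h1 | h1
      · rw [← hx']; exact Finset.inf'_le _ h1
      · rw [← hy']; exact Finset.inf'_le _ h1
    rw [this]
    exact Finset.mem_inter.2 ⟨hx, hy⟩
  · intro H
    obtain ⟨h1, h2⟩ := Finset.mem_inter.1 H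
    have e1 : U.inf' hU h = h a := le_antisymm (Finset.inf'_le _ h1)
      (Finset.le_inf' _ _ fun b hb => hle b (Finset.mem_union_left _ hb))
    have e2 : V.inf' hV h = h a := le_antisymm (Finset.inf'_le _ h2)
      (Finset.le_inf' _ _ fun b hb => hle b (Finset.mem_union_right _ hb))
    rw [e1, e2]

lemma exists_nat {n : ℕ} (L : ℕ) (hL : 0 < L) (u : Fin n → ℝ) (hu1 : ∑ i, (u i) ^ 2 = 1)
    (hu : ∀ i, ∃ k : ℤ, (u i) ^ 2 = (k : ℝ) / L) :
    ∃ m : Fin n → ℕ, (∀ i, (u i) ^ 2 = (m i : ℝ) / L) ∧ (∀ i, m i ≤ L) ∧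
      expandedSupport L u = Finset.univ.filter fun p : Fin n × Fin L => (p.2 : ℕ) < m p.1 := by
  have hL' : (0 : ℝ) < L := by exact_mod_cast hL
  have : ∀ i, ∃ k : ℕ, (u i) ^ 2 = (k : ℝ) / L := by
    intro i
    obtain ⟨k, hk⟩ := hu i
    have : (0 : ℝ) ≤ k := by
      have h0 := sq_nonneg (u i)
      rw [hk] at h0
      by_contra! hneg
      exact absurd h0 (not_le.2 (div_neg_of_neg_of_pos hneg hL'))
    have hk0 : 0 ≤ k := by exact_mod_cast this
    lift k to ℕ using hk0
    exact ⟨k, by simpa using hk⟩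
  choose m hm using this
  refine ⟨m, hm, ?_, ?_⟩
  · intro i
    have h1 : (u i) ^ 2 ≤ 1 := by
      rw [← hu1]
      exact Finset.single_le_sum (f := fun i => (u i) ^ 2) (fun i _ => sq_nonneg _)
        (Finset.mem_univ i)
    rw [hm, div_le_one hL'] at h1
    exact_mod_cast h1
  · ext p
    simp only [expandedSupport, Finset.mem_filter, Finset.mem_univ, true_and, hm]
    rw [div_mul_cancel₀ _ hL'.ne']
    norm_cast

lemma ratio_aux (L a b : ℕ) (hL : 0 < L) (hb : 0 < b) :
    ENNReal.ofReal (((a : ℝ) / L) / ((b : ℝ) / L)) = (a : ℝ≥0∞) / b := by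
  have hL' : (L : ℝ) ≠ 0 := by positivity
  rw [div_div_div_cancel_right₀ hL', ENNReal.ofReal_div_of_pos (by exact_mod_cast hb),
    ENNReal.ofReal_natCast, ENNReal.ofReal_natCast]

/-- For nonzero unit vectors `u, v` with squared entries integer multiples of `1/L` and
any index `j` with `u j ≠ 0` and `v j ≠ 0`: the probability that the minima of the hash
over `Ū` and `V̄` coincide and the common minimizer over `Ū ∪ V̄` lies in block
`{j} × {1,...,L}` is exactly `min(u[j]², v[j]²) / ∑ₖ max(u[k]², v[k]²)`; in particular,
conditioned on the two minima coinciding, the block index of the common minimizer equals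
`j` with probability `min(u[j]², v[j]²) / ∑_{k : u k ≠ 0, v k ≠ 0} min(u[k]², v[k]²)`. -/
theorem weighted_minhash_common_block_probability {n : ℕ} (L : ℕ) (hL : 0 < L)
    (u v : Fin n → ℝ) (hu0 : u ≠ 0) (hv0 : v ≠ 0)
    (hu1 : ∑ i, (u i) ^ 2 = 1) (hv1 : ∑ i, (v i) ^ 2 = 1)
    (hu : ∀ i, ∃ k : ℤ, (u i) ^ 2 = (k : ℝ) / L)
    (hv : ∀ i, ∃ k : ℤ, (v i) ^ 2 = (k : ℝ) / L)
    (hU : (expandedSupport L u).Nonempty) (hV : (expandedSupport L v).Nonempty)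
    (j : Fin n) (hju : u j ≠ 0) (hjv : v j ≠ 0) :
    (uniformHash (Fin n × Fin L)
        {h : Fin n × Fin L → ℝ |
          (expandedSupport L u).inf' hU h = (expandedSupport L v).inf' hV h ∧
          (argminOn (expandedSupport L u ∪ expandedSupport L v) hU.inl h).1 = j}
      = ENNReal.ofReal
          (min ((u j) ^ 2) ((v j) ^ 2) / ∑ k, max ((u k) ^ 2) ((v k) ^ 2)))
    ∧ (ProbabilityTheory.cond (uniformHash (Fin n × Fin L))
          {h : Fin n × Fin L → ℝ |
            (expandedSupport L u).inf' hU h = (expandedSupport L v).inf' hV h}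
          {h : Fin n × Fin L → ℝ |
            (argminOn (expandedSupport L u ∪ expandedSupport L v) hU.inl h).1 = j}
      = ENNReal.ofReal
          (min ((u j) ^ 2) ((v j) ^ 2) /
            ∑ k ∈ Finset.univ.filter (fun k => u k ≠ 0 ∧ v k ≠ 0),
              min ((u k) ^ 2) ((v k) ^ 2))) := by
  classical
  obtain ⟨m, hm, hmL, hmU⟩ := exists_nat L hL u hu1 hu
  obtain ⟨m', hm', hmL', hmV⟩ := exists_nat L hL v hv1 hv
  have hL' : (0 : ℝ) < L := by exact_mod_cast hL
  have hmin : ∀ k, min ((u k) ^ 2) ((v k) ^ 2) = ((min (m k) (m' k) : ℕ) : ℝ) / L := by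
    intro k
    rw [hm, hm', Nat.cast_min, min_div_div_right hL'.le]
  have hmax : ∀ k, max ((u k) ^ 2) ((v k) ^ 2) = ((max (m k) (m' k) : ℕ) : ℝ) / L := by
    intro k
    rw [hm, hm', Nat.cast_max, max_div_div_right hL'.le]
  set U := expandedSupport L u with hUdef
  set V := expandedSupport L v with hVdef
  have hWc : (U ∪ V).card = ∑ k, max (m k) (m' k) := by
    rw [← card_aux L (fun k => max (m k) (m' k)) (fun k => max_le (hmL k) (hmL' k))]
    congr 1
    ext p
    simp [hmU, hmV]
  have hIc : (U ∩ V).card = ∑ k, min (m k) (m' k) := by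
    rw [← card_aux L (fun k => min (m k) (m' k)) (fun k => min_le_of_left_le (hmL k))]
    congr 1
    ext p
    simp [hmU, hmV]
  have hTc : ((U ∩ V).filter fun p => p.1 = j).card = min (m j) (m' j) := by
    have := card_aux L (fun k => min (m k) (m' k)) (fun k => min_le_of_left_le (hmL k)) {j}
    rw [Finset.sum_singleton] at this
    rw [← this]
    congr 1
    ext p
    simp [hmU, hmV, and_comm]
  have hIW : U ∩ V ⊆ U ∪ V := Finset.inter_subset_union
  have hW0 : 0 < (U ∪ V).card := Finset.card_pos.2 hU.inl
  have hmj : 0 < min (m j) (m' j) := by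
    have h1 : 0 < (u j) ^ 2 := by positivity
    have h2 : 0 < (v j) ^ 2 := by positivity
    have h3 := lt_min h1 h2
    rw [hmin] at h3
    by_contra h0
    have : min (m j) (m' j) = 0 := by omega
    rw [this] at h3
    simp at h3
  have hI0 : 0 < (U ∩ V).card := by
    rw [hIc]
    exact lt_of_lt_of_le hmj (Finset.single_le_sum (f := fun k => min (m k) (m' k))
      (fun _ _ => Nat.zero_le _) (Finset.mem_univ j))
  have hA : uniformHash (Fin n × Fin L)
        {h : Fin n × Fin L → ℝ | U.inf' hU h = V.inf' hV h ∧
          (argminOn (U ∪ V) hU.inl h).1 = j} = (min (m j) (m' j) : ℕ) / (U ∪ V).card := by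
    rw [← hTc]
    refine prob_argmin (U ∪ V) _ ((Finset.filter_subset _ _).trans hIW) hU.inl _ ?_
    intro h hh
    rw [Set.mem_ofPred_eq, inf_eq_iff U V hU hV hU.inl h hh, Finset.mem_filter]
  have hB : uniformHash (Fin n × Fin L)
        {h : Fin n × Fin L → ℝ | U.inf' hU h = V.inf' hV h} =
          (U ∩ V).card / (U ∪ V).card := by
    refine prob_argmin (U ∪ V) _ hIW hU.inl _ ?_
    intro h hh
    rw [Set.mem_ofPred_eq, inf_eq_iff U V hU hV hU.inl h hh]
  constructor
  · rw [hA, hmin, Finset.sum_congr rfl fun k _ => hmax k, ← Finset.sum_div, ← Nat.cast_sum,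
      ← hWc, ratio_aux L _ _ hL hW0]
  · have hms : MeasurableSet {h : Fin n × Fin L → ℝ | U.inf' hU h = V.inf' hV h} := by
      have aux : ∀ (S : Finset (Fin n × Fin L)) (hS : S.Nonempty),
          Measurable fun h : Fin n × Fin L → ℝ => S.inf' hS h := by
        intro S hS
        have : Continuous fun h : Fin n × Fin L → ℝ => S.inf' hS h :=
          Continuous.finset_inf'_apply hS fun i _ => continuous_apply i
        exact this.measurable
      exact measurableSet_eq_fun (aux U hU) (aux V hV)
    have hsum : ∑ k ∈ Finset.univ.filter (fun k => u k ≠ 0 ∧ v k ≠ 0),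
        min ((u k) ^ 2) ((v k) ^ 2) = ∑ k, min ((u k) ^ 2) ((v k) ^ 2) := by
      apply Finset.sum_filter_of_ne
      intro k _ hk
      constructor
      · intro h0
        exact hk (by rw [h0]; simp [sq_nonneg])
      · intro h0
        exact hk (by rw [h0]; simp [sq_nonneg])
    rw [ProbabilityTheory.cond_apply hms, ← Set.ofPred_and, hA, hB, hsum, hmin,
      Finset.sum_congr rfl fun k _ => hmin k, ← Finset.sum_div, ← Nat.cast_sum,
      ← hIc, ratio_aux L _ _ hL hI0]
    have w0 : ((U ∪ V).card : ℝ≥0∞) ≠ 0 := by exact_mod_cast hW0.ne'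
    have i0 : ((U ∩ V).card : ℝ≥0∞) ≠ 0 := by exact_mod_cast hI0.ne'
    have wt : ((U ∪ V).card : ℝ≥0∞) ≠ ⊤ := ENNReal.natCast_ne_top _
    have it : ((U ∩ V).card : ℝ≥0∞) ≠ ⊤ := ENNReal.natCast_ne_top _
    rw [ENNReal.inv_div (Or.inl wt) (Or.inl w0), div_eq_mul_inv, div_eq_mul_inv, div_eq_mul_inv,
      mul_comm, mul_assoc, ← mul_assoc _ _ (_)⁻¹, ENNReal.inv_mul_cancel w0 wt, one_mul]
end
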